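/- Let Q ∈ L²_unif(ℝ), τ ∈ L¹_unif(ℝ), K := 2(‖Q‖_{L²_unif(ℝ)} + ‖τ‖_{L¹_unif(ℝ)}), and for u ∈ H¹(ℝ) define t[u] := ∫_ℝ |u'(x)|² dx − ∫_ℝ Q(x)( conj(u'(x)) u(x) + conj(u(x)) u'(x) ) dx + ∫_ℝ τ(x) |u(x)|² dx. Then for every u ∈ H¹(ℝ) with ‖u‖_{L²(ℝ)} = 1, the complex number λ := t[u] satisfies |Im λ| ≤ 5K ( Re λ + 4(2K+1)⁴ )^{3/4}. -/

import Mathlib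

open MeasureTheory

/-- The Stepanov `L²_unif` norm: `(sup_t ∫_t^{t+1} |Q|²)^{1/2}`. -/
noncomputable def stepL2 (Q : ℝ → ℂ) : ℝ :=
  Real.sqrt (⨆ t : ℝ, ∫ s in t..(t + 1), ‖Q s‖ ^ 2)

/-- The Stepanov `L¹_unif` norm: `sup_t ∫_t^{t+1} |τ|`. -/
noncomputable def stepL1 (τ : ℝ → ℂ) : ℝ :=
  ⨆ t : ℝ, ∫ s in t..(t + 1), ‖τ s‖

/-- Membership in the Stepanov space `L²_unif(ℝ)`: locally square integrable with
finite Stepanov norm. -/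
def InStepL2 (Q : ℝ → ℂ) : Prop :=
  AEStronglyMeasurable Q volume ∧
  LocallyIntegrable (fun s => ‖Q s‖ ^ 2) volume ∧
  BddAbove (Set.range fun t : ℝ => ∫ s in t..(t + 1), ‖Q s‖ ^ 2)

/-- Membership in the Stepanov space `L¹_unif(ℝ)`: locally integrable with
finite Stepanov norm. -/
def InStepL1 (τ : ℝ → ℂ) : Prop :=
  LocallyIntegrable τ volume ∧
  BddAbove (Set.range fun t : ℝ => ∫ s in t..(t + 1), ‖τ s‖)

/-- `u ∈ H¹(ℝ)` with derivative `u'`: `u` is absolutely continuous with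
`u x = u 0 + ∫_0^x u'`, and both `u` and `u'` are square integrable. -/
def InH1 (u u' : ℝ → ℂ) : Prop :=
  LocallyIntegrable u' volume ∧
  (∀ x : ℝ, u x = u 0 + ∫ s in (0:ℝ)..x, u' s) ∧
  MemLp u 2 volume ∧ MemLp u' 2 volume

/-- The constant `K = 2(‖Q‖_{L²_unif} + ‖τ‖_{L¹_unif})`. -/
noncomputable def Kc (Q τ : ℝ → ℂ) : ℝ := 2 * (stepL2 Q + stepL1 τ)

/-- The sesquilinear form `t[u] = ‖u'‖² - ∫ Q (conj(u')u + conj(u)u') + ∫ τ|u|²`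
associated with the Schrödinger operator with potential `q = Q' + τ`. -/
noncomputable def tform (Q τ u u' : ℝ → ℂ) : ℂ :=
  (Complex.ofReal (∫ x : ℝ, ‖u' x‖ ^ 2))
    - (∫ x : ℝ, Q x * ((starRingEnd ℂ) (u' x) * u x + (starRingEnd ℂ) (u x) * u' x))
    + ∫ x : ℝ, τ x * (‖u x‖ : ℂ) ^ 2

/-!
On every interval of length one, `‖u x‖²` is at most the integral over that interval of
`‖u‖² + 2 ‖u‖ ‖u'‖`, because `(‖u‖²)' = 2 Re ⟨u, u'⟩`. Multiplying by a weight whose integrals over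
unit intervals are at most `S` and summing over `[n, n + 1]`, `n ∈ ℤ`, bounds the weighted integral
of `‖u‖²` by `S (1 + 2r)`, where `‖u‖_{L²} = 1` and `r = ‖u'‖_{L²}`. With `v = √(1 + 2r)` and
Cauchy–Schwarz this gives `‖t[u] - r²‖ ≤ K v³ / 2`, which bounds `|Im t[u]|` from above and
`Re t[u]` from below; since `r² = (v² - 1)² / 4` is quartic in `v`, the latter yields
`v⁴ / 20 ≤ Re t[u] + 4 (2K + 1)⁴`.
-/

open Set
open scoped ENNReal

section CauchySchwarz

variable {α E F : Type*} [MeasurableSpace α] {μ : Measure α}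
  [NormedAddCommGroup E] [NormedAddCommGroup F]

theorem integrable_norm_mul_norm {f : α → E} {g : α → F} (hf : MemLp f 2 μ) (hg : MemLp g 2 μ) :
    Integrable (fun x => ‖f x‖ * ‖g x‖) μ :=
  hf.norm.integrable_mul hg.norm

theorem integral_norm_mul_norm_le_sqrt_mul_sqrt {f : α → E} {g : α → F}
    (hf : MemLp f 2 μ) (hg : MemLp g 2 μ) :
    ∫ x, ‖f x‖ * ‖g x‖ ∂μ ≤ √(∫ x, ‖f x‖ ^ 2 ∂μ) * √(∫ x, ‖g x‖ ^ 2 ∂μ) := by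
  simpa only [← Real.sqrt_eq_rpow, Real.rpow_two] using
    integral_mul_le_Lp_mul_Lq_of_nonneg Real.HolderConjugate.two_two
      (.of_forall fun x => norm_nonneg (f x)) (.of_forall fun x => norm_nonneg (g x))
      (by simpa using hf.norm) (by simpa using hg.norm)

end CauchySchwarz

section Partition

variable {α ι : Type*} [MeasurableSpace α] {μ : Measure α} [Countable ι]

theorem lintegral_mul_le_of_partition {s : ι → Set α} (hs : ∀ i, MeasurableSet (s i))
    (hdisj : Pairwise (Function.onFun Disjoint s)) (hcover : ⋃ i, s i = univ)
    {f g h : α → ℝ≥0∞} {S : ℝ≥0∞} (hf : AEMeasurable f μ)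
    (hfS : ∀ i, ∫⁻ x in s i, f x ∂μ ≤ S) (hgh : ∀ i, ∀ x ∈ s i, g x ≤ ∫⁻ y in s i, h y ∂μ) :
    ∫⁻ x, f x * g x ∂μ ≤ S * ∫⁻ x, h x ∂μ := by
  have lintegral_eq_tsum (F : α → ℝ≥0∞) : ∫⁻ x, F x ∂μ = ∑' i, ∫⁻ x in s i, F x ∂μ := by
    rw [← lintegral_iUnion hs hdisj, hcover, setLIntegral_univ]
  rw [lintegral_eq_tsum, lintegral_eq_tsum h, ← ENNReal.tsum_mul_left]
  refine ENNReal.tsum_le_tsum fun i => ?_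
  calc ∫⁻ x in s i, f x * g x ∂μ
      ≤ ∫⁻ x in s i, f x * (∫⁻ y in s i, h y ∂μ) ∂μ :=
        setLIntegral_mono' (hs i) fun x hx => by gcongr; exact hgh i x hx
    _ = (∫⁻ x in s i, f x ∂μ) * ∫⁻ y in s i, h y ∂μ := lintegral_mul_const'' _ hf.restrict
    _ ≤ S * ∫⁻ y in s i, h y ∂μ := by gcongr; exact hfS i

end Partition

section Primitive

variable {a b : ℝ}

theorem absolutelyContinuousOnInterval_of_dist_le {X Y : Type*} [PseudoMetricSpace X]
    [PseudoMetricSpace Y] {f : ℝ → X} {g : ℝ → Y} (hg : AbsolutelyContinuousOnInterval g a b)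
    (hfg : ∀ x ∈ uIcc a b, ∀ y ∈ uIcc a b, dist (f x) (f y) ≤ dist (g x) (g y)) :
    AbsolutelyContinuousOnInterval f a b := by
  rw [absolutelyContinuousOnInterval_iff] at hg ⊢
  intro ε hε
  obtain ⟨δ, hδ, hgδ⟩ := hg ε hε
  refine ⟨δ, hδ, fun I hI hIδ => (Finset.sum_le_sum fun i hi => ?_).trans_lt (hgδ I hI hIδ)⟩
  exact hfg _ (hI.1 i hi).1 _ (hI.1 i hi).2

theorem absolutelyContinuousOnInterval_of_sub_eq_integral {E : Type*} [NormedAddCommGroup E]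
    [NormedSpace ℝ E] {u u' : ℝ → E} (hu' : IntervalIntegrable u' volume a b)
    (hu : ∀ x ∈ uIcc a b, ∀ y ∈ uIcc a b, u y - u x = ∫ s in x..y, u' s) :
    AbsolutelyContinuousOnInterval u a b := by
  refine absolutelyContinuousOnInterval_of_dist_le
    (hu'.norm.absolutelyContinuousOnInterval_intervalIntegral left_mem_uIcc) fun x hx y hy => ?_
  have hax := hu'.norm.mono_set (uIcc_subset_uIcc left_mem_uIcc hx)
  have hay := hu'.norm.mono_set (uIcc_subset_uIcc left_mem_uIcc hy)
  rw [dist_comm, dist_comm (∫ s in a..x, ‖u' s‖), dist_eq_norm, hu x hx y hy, Real.dist_eq,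
    intervalIntegral.integral_interval_sub_left hay hax]
  exact intervalIntegral.norm_integral_le_abs_integral_norm

theorem ae_hasDerivAt_of_sub_eq_integral {E : Type*} [NormedAddCommGroup E] [NormedSpace ℝ E]
    [CompleteSpace E] {u u' : ℝ → E} (hu' : IntervalIntegrable u' volume a b)
    (hu : ∀ x ∈ uIcc a b, ∀ y ∈ uIcc a b, u y - u x = ∫ s in x..y, u' s) :
    ∀ᵐ x, x ∈ uIoc a b → HasDerivAt u (u' x) x := by
  have ne_max : ∀ᵐ x : ℝ, x ≠ max a b := by simp [ae_iff]
  filter_upwards [hu'.ae_hasDerivAt_integral, ne_max] with x hderiv hxmax hx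
  have hmem : uIcc a b ∈ nhds x := Icc_mem_nhds hx.1 (hx.2.lt_of_ne hxmax)
  refine ((hderiv (uIoc_subset_uIcc hx) a left_mem_uIcc).const_add (u a)).congr_of_eventuallyEq ?_
  filter_upwards [hmem] with y hy
  rw [← hu a left_mem_uIcc y hy, add_sub_cancel]

variable {E : Type*} [NormedAddCommGroup E] [InnerProductSpace ℝ E] [CompleteSpace E]
  {u u' : ℝ → E}

theorem norm_sq_sub_norm_sq_eq_integral_inner (hu' : IntervalIntegrable u' volume a b)
    (hu : ∀ x ∈ uIcc a b, ∀ y ∈ uIcc a b, u y - u x = ∫ s in x..y, u' s) :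
    ‖u b‖ ^ 2 - ‖u a‖ ^ 2 = ∫ x in a..b, 2 * inner ℝ (u x) (u' x) := by
  have norm_ac : AbsolutelyContinuousOnInterval (fun x => ‖u x‖) a b :=
    absolutelyContinuousOnInterval_of_dist_le
      (absolutelyContinuousOnInterval_of_sub_eq_integral hu' hu) fun x _ y _ =>
        (dist_norm_norm_le _ _).trans_eq (dist_eq_norm _ _).symm
  have norm_sq_ac : AbsolutelyContinuousOnInterval (fun x => ‖u x‖ ^ 2) a b := by
    simpa only [pow_two] using norm_ac.fun_mul norm_ac
  rw [← norm_sq_ac.integral_deriv_eq_sub]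
  refine intervalIntegral.integral_congr_ae ?_
  filter_upwards [ae_hasDerivAt_of_sub_eq_integral hu' hu] with x hderiv hx
  exact (hderiv hx).norm_sq.deriv

theorem norm_sq_sub_norm_sq_le_integral (hu' : IntervalIntegrable u' volume a b)
    (hu : ∀ x ∈ uIcc a b, ∀ y ∈ uIcc a b, u y - u x = ∫ s in x..y, u' s) {x y : ℝ}
    (hab : a ≤ b) (hx : x ∈ Icc a b) (hy : y ∈ Icc a b) :
    ‖u x‖ ^ 2 - ‖u y‖ ^ 2 ≤ 2 * ∫ s in a..b, ‖u s‖ * ‖u' s‖ := by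
  have hsub : uIcc y x ⊆ uIcc a b := by
    rw [uIcc_of_le hab]
    exact uIcc_subset_Icc hy hx
  have hint : IntervalIntegrable (fun s => ‖u s‖ * ‖u' s‖) volume a b :=
    hu'.norm.continuousOn_mul
      (absolutelyContinuousOnInterval_of_sub_eq_integral hu' hu).continuousOn.norm
  calc ‖u x‖ ^ 2 - ‖u y‖ ^ 2
      = ∫ s in y..x, 2 * inner ℝ (u s) (u' s) :=
        norm_sq_sub_norm_sq_eq_integral_inner (hu'.mono_set hsub)
          fun z hz w hw => hu z (hsub hz) w (hsub hw)
    _ ≤ |∫ s in y..x, 2 * (‖u s‖ * ‖u' s‖)| := by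
        refine (Real.le_norm_self _).trans (intervalIntegral.norm_integral_le_abs_of_norm_le
          (.of_forall fun s => ?_) ((hint.mono_set hsub).const_mul 2))
        rw [norm_mul, Real.norm_two]
        gcongr
        exact norm_inner_le_norm _ _
    _ ≤ |∫ s in a..b, 2 * (‖u s‖ * ‖u' s‖)| :=
        intervalIntegral.abs_integral_mono_interval
          (uIoc_subset_uIoc_of_uIcc_subset_uIcc hsub) (.of_forall fun s => by positivity)
          (hint.const_mul 2)
    _ = 2 * ∫ s in a..b, ‖u s‖ * ‖u' s‖ := by
        rw [abs_of_nonneg (intervalIntegral.integral_nonneg hab fun s _ => by positivity),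
          intervalIntegral.integral_const_mul]

theorem sub_mul_norm_sq_le_integral (hu' : IntervalIntegrable u' volume a b)
    (hu : ∀ x ∈ uIcc a b, ∀ y ∈ uIcc a b, u y - u x = ∫ s in x..y, u' s) {x : ℝ}
    (hab : a ≤ b) (hx : x ∈ Icc a b) :
    (b - a) * ‖u x‖ ^ 2 ≤
      (∫ s in a..b, ‖u s‖ ^ 2) + (b - a) * (2 * ∫ s in a..b, ‖u s‖ * ‖u' s‖) := by
  have hcont := (absolutelyContinuousOnInterval_of_sub_eq_integral hu' hu).continuousOn
  have averaged := intervalIntegral.integral_mono_on hab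
    (intervalIntegrable_const (μ := volume) (c := ‖u x‖ ^ 2 - 2 * ∫ s in a..b, ‖u s‖ * ‖u' s‖))
    (hcont.norm.fun_pow 2).intervalIntegrable
    fun y hy => sub_le_comm.mp (norm_sq_sub_norm_sq_le_integral hu' hu hab hx hy)
  rw [intervalIntegral.integral_const, smul_eq_mul, mul_sub] at averaged
  linarith

end Primitive

section SobolevDensity

variable {E : Type*} [NormedAddCommGroup E]

/-- The density `‖u‖² + 2 ‖u‖ ‖u'‖`, whose integral over a unit interval dominates `‖u x‖²` for
every `x` in that interval when `u'` is the derivative of `u`. -/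
def sobolevDensity (u u' : ℝ → E) (x : ℝ) : ℝ := ‖u x‖ ^ 2 + 2 * (‖u x‖ * ‖u' x‖)

variable {u u' : ℝ → E}

theorem sobolevDensity_nonneg (x : ℝ) : 0 ≤ sobolevDensity u u' x := by
  unfold sobolevDensity
  positivity

theorem integrable_sobolevDensity (hu : MemLp u 2) (hu' : MemLp u' 2) :
    Integrable (sobolevDensity u u') :=
  (hu.integrable_norm_pow two_ne_zero).add ((integrable_norm_mul_norm hu hu').const_mul 2)

theorem integral_sobolevDensity_le (hu : MemLp u 2) (hu' : MemLp u' 2) :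
    ∫ x, sobolevDensity u u' x ≤
      (∫ x, ‖u x‖ ^ 2) + 2 * (√(∫ x, ‖u x‖ ^ 2) * √(∫ x, ‖u' x‖ ^ 2)) := by
  unfold sobolevDensity
  rw [integral_add (hu.integrable_norm_pow two_ne_zero)
    ((integrable_norm_mul_norm hu hu').const_mul 2), integral_const_mul]
  gcongr
  exact integral_norm_mul_norm_le_sqrt_mul_sqrt hu hu'

end SobolevDensity

theorem integral_unit_nonneg {w : ℝ → ℝ} (hw : 0 ≤ w) (t : ℝ) : 0 ≤ ∫ s in t..(t + 1), w s :=
  intervalIntegral.integral_nonneg (by simp) fun s _ => hw s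

namespace InH1

variable {u u' : ℝ → ℂ}

theorem memLp (hu : InH1 u u') : MemLp u 2 := hu.2.2.1

theorem memLp_deriv (hu : InH1 u u') : MemLp u' 2 := hu.2.2.2

theorem intervalIntegrable (hu : InH1 u u') (a b : ℝ) : IntervalIntegrable u' volume a b :=
  (hu.1.integrableOn_isCompact isCompact_uIcc).intervalIntegrable

theorem sub_eq_integral (hu : InH1 u u') (x y : ℝ) : u y - u x = ∫ s in x..y, u' s := by
  rw [hu.2.1 x, hu.2.1 y, add_sub_add_left_eq_sub, intervalIntegral.integral_interval_sub_left
    (hu.intervalIntegrable 0 y) (hu.intervalIntegrable 0 x)]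

theorem norm_sq_le_setIntegral_sobolevDensity (hu : InH1 u u') {n x : ℝ}
    (hx : x ∈ Ioc n (n + 1)) :
    ‖u x‖ ^ 2 ≤ ∫ y in Ioc n (n + 1), sobolevDensity u u' y := by
  have hn : n ≤ n + 1 := by linarith
  have hnorm := hu.memLp.integrable_norm_pow two_ne_zero
  have hmul := integrable_norm_mul_norm hu.memLp hu.memLp_deriv
  have bound := sub_mul_norm_sq_le_integral (hu.intervalIntegrable n (n + 1))
    (fun x _ y _ => hu.sub_eq_integral x y) hn (Ioc_subset_Icc_self hx)
  rw [add_sub_cancel_left, one_mul, one_mul, ← intervalIntegral.integral_const_mul,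
    ← intervalIntegral.integral_add hnorm.intervalIntegrable
      (hmul.const_mul 2).intervalIntegrable] at bound
  rwa [intervalIntegral.integral_of_le hn] at bound

section Weight

variable {w : ℝ → ℝ} {S : ℝ}

theorem lintegral_mul_norm_sq_le (hu : InH1 u u') (hw : LocallyIntegrable w) (hw_nonneg : 0 ≤ w)
    (hwS : ∀ t : ℝ, ∫ s in t..(t + 1), w s ≤ S) :
    ∫⁻ x, ENNReal.ofReal (w x * ‖u x‖ ^ 2) ≤
      ENNReal.ofReal (S * ∫ x, sobolevDensity u u' x) := by
  have hS : 0 ≤ S := (integral_unit_nonneg hw_nonneg 0).trans (hwS 0)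
  have hD := integrable_sobolevDensity hu.memLp hu.memLp_deriv
  have hD_nonneg : 0 ≤ sobolevDensity u u' := sobolevDensity_nonneg
  simp only [ENNReal.ofReal_mul (hw_nonneg _)]
  rw [ENNReal.ofReal_mul hS, ofReal_integral_eq_lintegral_ofReal hD (.of_forall hD_nonneg)]
  refine lintegral_mul_le_of_partition (s := fun n : ℤ => Ioc (n : ℝ) (n + 1))
    (fun _ => measurableSet_Ioc) (pairwise_disjoint_Ioc_intCast ℝ) (iUnion_Ioc_intCast ℝ)
    hw.aestronglyMeasurable.aemeasurable.ennreal_ofReal (fun n => ?_) fun n x hx => ?_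
  · have hwn : IntegrableOn w (Ioc (n : ℝ) (n + 1)) :=
      (hw.integrableOn_isCompact isCompact_Icc).mono_set Ioc_subset_Icc_self
    rw [← ofReal_integral_eq_lintegral_ofReal hwn (.of_forall hw_nonneg),
      ← intervalIntegral.integral_of_le (by simp)]
    exact ENNReal.ofReal_le_ofReal (hwS n)
  · rw [← ofReal_integral_eq_lintegral_ofReal hD.integrableOn (.of_forall hD_nonneg)]
    exact ENNReal.ofReal_le_ofReal (hu.norm_sq_le_setIntegral_sobolevDensity hx)

theorem integrable_mul_norm_sq (hu : InH1 u u') (hw : LocallyIntegrable w) (hw_nonneg : 0 ≤ w)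
    (hwS : ∀ t : ℝ, ∫ s in t..(t + 1), w s ≤ S) :
    Integrable fun x => w x * ‖u x‖ ^ 2 := by
  refine ⟨hw.aestronglyMeasurable.mul (hu.memLp.1.norm.pow 2), ?_⟩
  rw [hasFiniteIntegral_iff_ofReal (.of_forall fun x => mul_nonneg (hw_nonneg x) (sq_nonneg _))]
  exact (hu.lintegral_mul_norm_sq_le hw hw_nonneg hwS).trans_lt ENNReal.ofReal_lt_top

theorem integral_mul_norm_sq_le (hu : InH1 u u') (hw : LocallyIntegrable w) (hw_nonneg : 0 ≤ w)
    (hwS : ∀ t : ℝ, ∫ s in t..(t + 1), w s ≤ S) :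
    ∫ x, w x * ‖u x‖ ^ 2 ≤ S * ∫ x, sobolevDensity u u' x := by
  have hS : 0 ≤ S := (integral_unit_nonneg hw_nonneg 0).trans (hwS 0)
  rw [integral_eq_lintegral_of_nonneg_ae
    (.of_forall fun x => mul_nonneg (hw_nonneg x) (sq_nonneg _))
    (hu.integrable_mul_norm_sq hw hw_nonneg hwS).1]
  exact ENNReal.toReal_le_of_le_ofReal (mul_nonneg hS (integral_nonneg sobolevDensity_nonneg))
    (hu.lintegral_mul_norm_sq_le hw hw_nonneg hwS)

end Weight

end InH1

section Stepanov

variable {Q τ : ℝ → ℂ}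

theorem stepL2_nonneg : 0 ≤ stepL2 Q := Real.sqrt_nonneg _

theorem stepL1_nonneg : 0 ≤ stepL1 τ :=
  Real.iSup_nonneg <| integral_unit_nonneg fun s => norm_nonneg (τ s)

theorem InStepL2.integral_norm_sq_le (hQ : InStepL2 Q) (t : ℝ) :
    ∫ s in t..(t + 1), ‖Q s‖ ^ 2 ≤ stepL2 Q ^ 2 := by
  have hsup : 0 ≤ ⨆ t : ℝ, ∫ s in t..(t + 1), ‖Q s‖ ^ 2 :=
    Real.iSup_nonneg <| integral_unit_nonneg fun s => sq_nonneg ‖Q s‖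
  rw [stepL2, Real.sq_sqrt hsup]
  exact le_ciSup hQ.2.2 t

theorem InStepL1.integral_norm_le (hτ : InStepL1 τ) (t : ℝ) :
    ∫ s in t..(t + 1), ‖τ s‖ ≤ stepL1 τ :=
  le_ciSup hτ.2 t

end Stepanov

section Form

variable {Q τ u u' : ℝ → ℂ}

theorem norm_integral_mul_norm_sq_le (hτ : InStepL1 τ) (hu : InH1 u u') :
    ‖∫ x, τ x * (‖u x‖ : ℂ) ^ 2‖ ≤ stepL1 τ * ∫ x, sobolevDensity u u' x := by
  refine (norm_integral_le_integral_norm _).trans ?_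
  simpa only [norm_mul, norm_pow, Complex.norm_real, norm_norm] using
    hu.integral_mul_norm_sq_le (fun x => (hτ.1 x).norm) (fun x => norm_nonneg (τ x))
      hτ.integral_norm_le

theorem memLp_two_mul_of_inStepL2 (hQ : InStepL2 Q) (hu : InH1 u u') :
    MemLp (fun x => Q x * u x) 2 := by
  refine (memLp_two_iff_integrable_sq_norm (hQ.1.mul hu.memLp.1)).2 ?_
  simpa only [Pi.mul_apply, norm_mul, mul_pow] using
    hu.integrable_mul_norm_sq hQ.2.1 (fun x => sq_nonneg ‖Q x‖) hQ.integral_norm_sq_le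

theorem sqrt_integral_norm_mul_sq_le (hQ : InStepL2 Q) (hu : InH1 u u') :
    √(∫ x, ‖Q x * u x‖ ^ 2) ≤ stepL2 Q * √(∫ x, sobolevDensity u u' x) := by
  rw [← Real.sqrt_sq stepL2_nonneg, ← Real.sqrt_mul (sq_nonneg _)]
  refine Real.sqrt_le_sqrt ?_
  simpa only [norm_mul, mul_pow] using
    hu.integral_mul_norm_sq_le hQ.2.1 (fun x => sq_nonneg ‖Q x‖) hQ.integral_norm_sq_le

theorem norm_integral_mul_deriv_norm_sq_le (hQ : InStepL2 Q) (hu : InH1 u u') :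
    ‖∫ x, Q x * ((starRingEnd ℂ) (u' x) * u x + (starRingEnd ℂ) (u x) * u' x)‖ ≤
      2 * (stepL2 Q * √(∫ x, sobolevDensity u u' x) * √(∫ x, ‖u' x‖ ^ 2)) := by
  have hQu := memLp_two_mul_of_inStepL2 hQ hu
  calc ‖∫ x, Q x * ((starRingEnd ℂ) (u' x) * u x + (starRingEnd ℂ) (u x) * u' x)‖
      ≤ ∫ x, 2 * (‖Q x * u x‖ * ‖u' x‖) := by
        refine norm_integral_le_of_norm_le
          ((integrable_norm_mul_norm hQu hu.memLp_deriv).const_mul 2)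
          (.of_forall fun x => ?_)
        calc ‖Q x * ((starRingEnd ℂ) (u' x) * u x + (starRingEnd ℂ) (u x) * u' x)‖
            ≤ ‖Q x‖ * (‖u' x‖ * ‖u x‖ + ‖u x‖ * ‖u' x‖) := by
              rw [norm_mul]
              gcongr
              refine (norm_add_le _ _).trans_eq ?_
              simp only [norm_mul, Complex.norm_conj]
          _ = 2 * (‖Q x * u x‖ * ‖u' x‖) := by rw [norm_mul]; ring
    _ ≤ 2 * (√(∫ x, ‖Q x * u x‖ ^ 2) * √(∫ x, ‖u' x‖ ^ 2)) := by
        rw [integral_const_mul]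
        gcongr
        exact integral_norm_mul_norm_le_sqrt_mul_sqrt hQu hu.memLp_deriv
    _ ≤ 2 * (stepL2 Q * √(∫ x, sobolevDensity u u' x) * √(∫ x, ‖u' x‖ ^ 2)) := by
        gcongr
        exact sqrt_integral_norm_mul_sq_le hQ hu

theorem norm_tform_sub_le (hQ : InStepL2 Q) (hτ : InStepL1 τ) (hu : InH1 u u') :
    ‖tform Q τ u u' - (∫ x, ‖u' x‖ ^ 2 : ℝ)‖ ≤
      2 * (stepL2 Q * √(∫ x, sobolevDensity u u' x) * √(∫ x, ‖u' x‖ ^ 2)) +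
        stepL1 τ * ∫ x, sobolevDensity u u' x := by
  rw [tform, add_sub_right_comm, sub_sub_cancel_left, neg_add_eq_sub, norm_sub_rev]
  exact (norm_sub_le _ _).trans
    (add_le_add (norm_integral_mul_deriv_norm_sq_le hQ hu) (norm_integral_mul_norm_sq_le hτ hu))

theorem norm_tform_sub_le_of_integral_norm_sq_eq_one
    (hQ : InStepL2 Q) (hτ : InStepL1 τ) (hu : InH1 u u')
    (hnorm : ∫ x, ‖u x‖ ^ 2 = 1) :
    ‖tform Q τ u u' - (∫ x, ‖u' x‖ ^ 2 : ℝ)‖ ≤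
      Kc Q τ / 2 * √(1 + 2 * √(∫ x, ‖u' x‖ ^ 2)) ^ 3 := by
  set r := √(∫ x, ‖u' x‖ ^ 2)
  set v := √(1 + 2 * r)
  have hr : 0 ≤ r := Real.sqrt_nonneg _
  have hv_sq : v ^ 2 = 1 + 2 * r := Real.sq_sqrt (by positivity)
  have one_le_v : 1 ≤ v := Real.one_le_sqrt.2 (by linarith)
  have hq : 0 ≤ stepL2 Q := stepL2_nonneg
  have hs : 0 ≤ stepL1 τ := stepL1_nonneg
  have hD : ∫ x, sobolevDensity u u' x ≤ v ^ 2 := by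
    simpa [hnorm, hv_sq] using integral_sobolevDensity_le hu.memLp hu.memLp_deriv
  have hsqrtD : √(∫ x, sobolevDensity u u' x) ≤ v := by
    simpa [Real.sqrt_sq (zero_le_one.trans one_le_v)] using Real.sqrt_le_sqrt hD
  calc _ ≤ 2 * (stepL2 Q * √(∫ x, sobolevDensity u u' x) * r) +
        stepL1 τ * ∫ x, sobolevDensity u u' x := norm_tform_sub_le hQ hτ hu
    _ ≤ 2 * (stepL2 Q * v * (v ^ 2 / 2)) + stepL1 τ * v ^ 3 := by
        gcongr
        · linarith
        · exact hD.trans (pow_le_pow_right₀ one_le_v (by simp))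
    _ = Kc Q τ / 2 * v ^ 3 := by rw [Kc]; ring

end Form

section Arithmetic

theorem le_rpow_div_of_pow_le_pow {x y : ℝ} {m n : ℕ} (hx : 0 ≤ x) (hn : n ≠ 0)
    (h : y ^ n ≤ x ^ m) : y ≤ x ^ ((m : ℝ) / n) := by
  refine le_of_pow_le_pow_left₀ hn (Real.rpow_nonneg hx _) (h.trans_eq ?_)
  rw [← Real.rpow_mul_natCast hx, div_mul_cancel₀ _ (Nat.cast_ne_zero.2 hn), Real.rpow_natCast]

theorem pow_four_div_twenty_le {K v : ℝ} (hK : 0 ≤ K) (hv : 0 ≤ v) :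
    v ^ 4 / 20 ≤ ((v ^ 2 - 1) / 2) ^ 2 - K / 2 * v ^ 3 + 4 * (2 * K + 1) ^ 4 := by
  set c := 2 * K + 1 with hc
  have cubic : K / 2 * v ^ 3 ≤ c / 4 * v ^ 3 :=
    mul_le_mul_of_nonneg_right (by linarith [hc]) (pow_nonneg hv 3)
  have quadratic : v ^ 2 ≤ c ^ 2 * v ^ 2 :=
    le_mul_of_one_le_left (sq_nonneg v) (one_le_pow₀ (by linarith))
  have quartic : 0 ≤ v ^ 4 / 5 - c / 4 * v ^ 3 - c ^ 2 * v ^ 2 / 2 + 4 * c ^ 4 := by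
    -- Subtracting `(v² - (5 / 8) c v - 2 c²)² / 5` leaves a positive definite form in `c v`, `c²`.
    linarith [sq_nonneg (v ^ 2 - 5 / 8 * c * v - 2 * c ^ 2), sq_nonneg (c * v - 2 * c ^ 2),
      sq_nonneg (c * v), sq_nonneg (c ^ 2)]
  linarith

theorem abs_im_le_of_norm_sub_sq_le {z : ℂ} {K r : ℝ} (hK : 0 ≤ K) (hr : 0 ≤ r)
    (hz : ‖z - (r ^ 2 : ℝ)‖ ≤ K / 2 * √(1 + 2 * r) ^ 3) :
    |z.im| ≤ 5 * K * (z.re + 4 * (2 * K + 1) ^ 4) ^ ((3 : ℝ) / 4) := by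
  set v := √(1 + 2 * r)
  have hv : 0 ≤ v := Real.sqrt_nonneg _
  have hv_sq : v ^ 2 = 1 + 2 * r := Real.sq_sqrt (by positivity)
  have im_le : |z.im| ≤ K / 2 * v ^ 3 := by
    have := (Complex.abs_im_le_norm _).trans hz
    rwa [Complex.sub_im, Complex.ofReal_im, sub_zero] at this
  have le_re : r ^ 2 - K / 2 * v ^ 3 ≤ z.re := by
    have := (abs_le.1 ((Complex.abs_re_le_norm _).trans hz)).1
    rw [Complex.sub_re, Complex.ofReal_re] at this
    linarith
  have base_ge : v ^ 4 / 20 ≤ z.re + 4 * (2 * K + 1) ^ 4 := by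
    have := pow_four_div_twenty_le hK hv
    rw [show (v ^ 2 - 1) / 2 = r by linarith] at this
    linarith
  have pow_le : (v ^ 3 / 10) ^ 4 ≤ (z.re + 4 * (2 * K + 1) ^ 4) ^ 3 :=
    calc (v ^ 3 / 10) ^ 4 ≤ (v ^ 4 / 20) ^ 3 := by linarith [pow_nonneg hv 12]
      _ ≤ _ := by gcongr
  calc |z.im| ≤ 5 * K * (v ^ 3 / 10) := im_le.trans_eq (by ring)
    _ ≤ _ := by
        gcongr
        exact_mod_cast le_rpow_div_of_pow_le_pow (le_trans (by positivity) base_ge) four_ne_zero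
          pow_le

end Arithmetic

/-- Parabola localization of the numerical range (hence the spectrum) of the Schrödinger
operator `S(q)`, `q = Q' + τ`: for a unit vector `u ∈ H¹(ℝ)`, `λ = t[u]` satisfies
`|Im λ| ≤ 5K (Re λ + 4(2K+1)⁴)^{3/4}`. -/
theorem spectrum_in_parabola (Q τ u u' : ℝ → ℂ)
    (hQ : InStepL2 Q) (hτ : InStepL1 τ) (hu : InH1 u u')
    (hnorm : (∫ x : ℝ, ‖u x‖ ^ 2) = 1) :
    |(tform Q τ u u').im| ≤
      5 * Kc Q τ * ((tform Q τ u u').re + 4 * (2 * Kc Q τ + 1) ^ 4) ^ ((3 : ℝ) / 4) := by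
  have hK : 0 ≤ Kc Q τ := mul_nonneg zero_le_two (add_nonneg stepL2_nonneg stepL1_nonneg)
  have hdirichlet : √(∫ x, ‖u' x‖ ^ 2) ^ 2 = ∫ x, ‖u' x‖ ^ 2 :=
    Real.sq_sqrt (integral_nonneg fun x => sq_nonneg _)
  refine abs_im_le_of_norm_sub_sq_le hK (Real.sqrt_nonneg (∫ x, ‖u' x‖ ^ 2)) ?_
  rw [hdirichlet]
  exact norm_tform_sub_le_of_integral_norm_sq_eq_one hQ hτ hu hnorm
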